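/- Let Ω ⊂ ℝ^d be a bounded C^{1,1} domain and d(x) the distance from x to ∂Ω. Then there exists a regularized distance ρ ∈ C^{1,1}(Ω̄) such that: (i) c d(x) ≤ ρ(x) ≤ C d(x) for all x ∈ Ω with constants c, C > 0; (ii) |Dρ| ≥ C₀ > 0 on ∂Ω; and (iii) for every integer k ≥ 1, the function |D^{k+2} ρ| ρ^k is bounded on Ω. -/

import Mathlib

open MeasureTheory Metric Real
open scoped RealInnerProductSpace ENNReal Topology

noncomputable section

/-- Euclidean space `ℝ^d`. -/
abbrev EucD (d : ℕ) : Type := EuclideanSpace ℝ (Fin d)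

/-- `Ω` is a bounded `C^{1,1}` domain (with `C^{1,1}` character `K`): it is open,
bounded, nonempty, and near every boundary point it is the sublevel set of a `C^1`
defining function with `K`-Lipschitz derivative and nondegenerate gradient. -/
def IsC11Domain (d : ℕ) (Ω : Set (EucD d)) (K : ℝ) : Prop :=
  IsOpen Ω ∧ Bornology.IsBounded Ω ∧ Ω.Nonempty ∧ 0 < K ∧
    ∀ x ∈ frontier Ω, ∃ (ρ : EucD d → ℝ) (r : ℝ), 0 < r ∧
      ContDiff ℝ 1 ρ ∧ LipschitzWith (Real.toNNReal K) (fderiv ℝ ρ) ∧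
      (∀ y ∈ Metric.ball x r, K⁻¹ ≤ ‖fderiv ℝ ρ y‖) ∧
      Ω ∩ Metric.ball x r = {y | ρ y < 0} ∩ Metric.ball x r ∧
      frontier Ω ∩ Metric.ball x r = {y | ρ y = 0} ∩ Metric.ball x r

/-- `n` is the outward unit normal vector field along `∂Ω`. -/
def IsOutwardNormal (d : ℕ) (Ω : Set (EucD d)) (n : EucD d → EucD d) : Prop :=
  ∀ x ∈ frontier Ω, ‖n x‖ = 1 ∧
    ∃ δ : ℝ, 0 < δ ∧ ∀ t : ℝ, 0 < t → t < δ →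
      x + t • n x ∉ closure Ω ∧ x - t • n x ∈ Ω

/-- The surface measure on `∂Ω`: `(d-1)`-dimensional Hausdorff measure. -/
def surfD (d : ℕ) : Measure (EucD d) := MeasureTheory.Measure.hausdorffMeasure ((d : ℝ) - 1)

/-- `u ∈ W^{1,2}(Ω ∩ B_2)` (with boundary trace in `L²(∂Ω ∩ B_2)`), encoded via a
differentiable representative with square-integrable value and gradient. -/
def MemW12Dom (d : ℕ) (Ω : Set (EucD d)) (u : EucD d → ℝ) : Prop :=
  Differentiable ℝ u ∧
    IntegrableOn (fun x => (u x) ^ 2 + ‖gradient u x‖ ^ 2) (Ω ∩ Metric.ball (0 : EucD d) 2) ∧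
    IntegrableOn (fun x => (u x) ^ 2) (frontier Ω ∩ Metric.ball (0 : EucD d) 2) (surfD d)

/-- Weak solution of `div(A Du) = V u` in `Ω ∩ B_2` with Robin condition
`A Du · n = η u` on `∂Ω ∩ B_2`:
`∫_{Ω∩B_2} (A Du · Dψ + V u ψ) dx = ∫_{∂Ω∩B_2} η u ψ dσ` for all test functions `ψ`
compactly supported in `B_2`. -/
def IsWeakSolDom (d : ℕ) (Ω : Set (EucD d)) (A : EucD d → EucD d →L[ℝ] EucD d)
    (V η u : EucD d → ℝ) : Prop :=
  MemW12Dom d Ω u ∧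
    ∀ ψ : EucD d → ℝ, ContDiff ℝ (⊤ : ℕ∞) ψ → HasCompactSupport ψ →
      tsupport ψ ⊆ Metric.ball (0 : EucD d) 2 →
      ∫ x in Ω ∩ Metric.ball (0 : EucD d) 2,
          (⟪A x (gradient u x), gradient ψ x⟫ + V x * u x * ψ x)
        = ∫ x in frontier Ω ∩ Metric.ball (0 : EucD d) 2, η x * u x * ψ x ∂(surfD d)

/-- `A` is symmetric. -/
def IsSymmD (d : ℕ) (A : EucD d → EucD d →L[ℝ] EucD d) : Prop :=
  ∀ x v w, ⟪A x v, w⟫ = ⟪v, A x w⟫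

/-- Ellipticity: `λ I_d ≤ A ≤ λ⁻¹ I_d`. -/
def IsEllipticD (d : ℕ) (lam : ℝ) (A : EucD d → EucD d →L[ℝ] EucD d) : Prop :=
  ∀ x v, lam * ‖v‖ ^ 2 ≤ ⟪A x v, v⟫ ∧ ⟪A x v, v⟫ ≤ lam⁻¹ * ‖v‖ ^ 2

/-- `‖V‖_{W^{1,∞}} ≤ M`: bounded by `M` with Lipschitz constant `M`. -/
def W1InfD (d : ℕ) (V : EucD d → ℝ) (M : ℝ) : Prop :=
  (∀ x, |V x| ≤ M) ∧ LipschitzWith (Real.toNNReal M) V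

section Mollifier

open MeasureTheory

variable {E : Type} [NormedAddCommGroup E] [InnerProductSpace ℝ E] [FiniteDimensional ℝ E]
  [MeasurableSpace E] [BorelSpace E]

/-- Derivative bound for convolutions. -/
theorem conv_iter_bound (h : E → ℝ) (hh : Continuous h) (n : ℕ) :
    ∀ (G G' : Type) [NormedAddCommGroup G] [NormedSpace ℝ G] [NormedAddCommGroup G']
      [NormedSpace ℝ G'] (L : ℝ →L[ℝ] G →L[ℝ] G') (g : E → G),
      ContDiff ℝ (⊤ : ℕ∞) g → HasCompactSupport g → ∀ x : E,
      ‖iteratedFDeriv ℝ n (MeasureTheory.convolution h g L volume) x‖ ≤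
        ‖L‖ * ∫ t, |h t| * ‖iteratedFDeriv ℝ n g (x - t)‖ := by
  induction n with
  | zero =>
    intro G G' _ _ _ _ L g hg hcg x
    simp only [norm_iteratedFDeriv_zero]
    rw [← integral_const_mul]
    refine (norm_integral_le_integral_norm _).trans ?_
    have hcont : Continuous (fun t : E => g (x - t)) := hg.continuous.comp (by fun_prop)
    have hcs : HasCompactSupport (fun t : E => g (x - t)) :=
      hcg.comp_homeomorph (Homeomorph.subLeft x)
    apply integral_mono_of_nonneg
    · exact Filter.Eventually.of_forall (fun t => norm_nonneg _)
    · apply Integrable.const_mul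
      apply Continuous.integrable_of_hasCompactSupport
      · exact (hh.abs).mul hcont.norm
      · exact hcs.norm.mul_left
    · refine Filter.Eventually.of_forall (fun t => ?_)
      have := L.le_opNorm₂ (h t) (g (x - t))
      simpa [mul_assoc] using this
  | succ n ih =>
    intro G G' _ _ _ _ L g hg hcg x
    rw [← norm_iteratedFDeriv_fderiv]
    have hfd : fderiv ℝ (MeasureTheory.convolution h g L volume) =
        MeasureTheory.convolution h (fderiv ℝ g) (L.precompR E) volume := by
      funext y
      exact (hcg.hasFDerivAt_convolution_right L hh.locallyIntegrable
        (hg.of_le (by exact_mod_cast le_top)) y).fderiv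
    rw [hfd]
    have h1 : ContDiff ℝ (⊤ : ℕ∞) (fderiv ℝ g) := hg.fderiv_right (by simp)
    refine (ih _ _ (L.precompR E) (fderiv ℝ g) h1 (hcg.fderiv (𝕜 := ℝ)) x).trans ?_
    simp only [norm_iteratedFDeriv_fderiv]
    refine mul_le_mul_of_nonneg_right (ContinuousLinearMap.norm_precompR_le E L) ?_
    exact integral_nonneg (fun t => by positivity)

theorem exists_mollifier (E : Type) [NormedAddCommGroup E] [InnerProductSpace ℝ E]
    [FiniteDimensional ℝ E] [MeasurableSpace E] [BorelSpace E] :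
    ∃ (V : ℝ → (E → ℝ) → E → ℝ) (Cm : ℕ → ℝ), (∀ m, 0 ≤ Cm m) ∧
      ∀ ε : ℝ, 0 < ε → ∀ h : E → ℝ, Continuous h →
        ContDiff ℝ (⊤ : ℕ∞) (V ε h) ∧
        (∀ x M, (∀ y ∈ ball x ε, |h y| ≤ M) → ∀ m : ℕ,
          ‖iteratedFDeriv ℝ m (V ε h) x‖ * ε ^ m ≤ Cm m * M) ∧
        (∀ x a, (∀ y ∈ ball x ε, a ≤ h y) → a ≤ V ε h x) ∧
        (∀ x a, (∀ y ∈ ball x ε, h y ≤ a) → V ε h x ≤ a) ∧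
        (∀ (x₀ : E) (a : ℝ) (A : E →L[ℝ] ℝ) (x : E),
          V ε (fun y => h y - (a + A (y - x₀))) x = V ε h x - (a + A (x - x₀))) := by
  let φ : ContDiffBump (0 : E) := ⟨1 / 4, 1 / 2, by norm_num, by norm_num⟩
  set η : E → ℝ := φ.normed volume with hη
  have hηc : ContDiff ℝ (⊤ : ℕ∞) η := φ.contDiff_normed
  have hηs : HasCompactSupport η := φ.hasCompactSupport_normed
  have hηt : tsupport η ⊆ closedBall (0 : E) (1 / 2) := (φ.tsupport_normed_eq (μ := volume)).subset
  have hη0 : ∀ x, 0 ≤ η x := fun x => φ.nonneg_normed x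
  have hηn : ∀ x, η (-x) = η x := fun x => φ.normed_neg x
  have hη1 : ∫ x, η x = 1 := φ.integral_normed
  have hηi : Integrable η := hηc.continuous.integrable_of_hasCompactSupport hηs
  let V : ℝ → (E → ℝ) → E → ℝ := fun ε h x =>
    MeasureTheory.convolution (fun y => h (ε • y)) η (ContinuousLinearMap.mul ℝ ℝ) volume (ε⁻¹ • x)
  have hV : ∀ ε : ℝ, 0 < ε → ∀ h x, V ε h x = ∫ z, h (x - ε • z) * η z := by
    intro ε hε h x
    have := integral_sub_left_eq_self (fun z => h (x - ε • z) * η z) volume (ε⁻¹ • x)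
    rw [← this]
    simp only [V, convolution_def]
    congr 1
    funext t
    have : x - ε • (ε⁻¹ • x - t) = ε • t := by
      rw [smul_sub, smul_smul, mul_inv_cancel₀ hε.ne', one_smul]; abel
    rw [this]; rfl
  refine ⟨V, fun m => ∫ t, ‖iteratedFDeriv ℝ m η t‖, fun m => integral_nonneg fun t => norm_nonneg _, ?_⟩
  intro ε hε h hh
  have hhε : Continuous (fun y => h (ε • y)) := hh.comp (by fun_prop)
  have hIntg : ∀ (h' : E → ℝ), Continuous h' → ∀ x, Integrable (fun z => h' (x - ε • z) * η z) := by
    intro h' hh' x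
    apply Continuous.integrable_of_hasCompactSupport
    · exact (hh'.comp (by fun_prop)).mul hηc.continuous
    · exact hηs.mul_left
  have hzero : ∀ z, z ∉ ball (0 : E) 1 → η z = 0 := by
    intro z hz
    by_contra hne
    have := hηt (subset_tsupport _ hne)
    simp only [mem_closedBall, mem_ball, dist_zero_right] at this hz
    linarith
  have hcv : ContDiff ℝ (⊤ : ℕ∞) (MeasureTheory.convolution (fun y => h (ε • y)) η
      (ContinuousLinearMap.mul ℝ ℝ) volume) :=
    hηs.contDiff_convolution_right _ hhε.locallyIntegrable hηc
  have hball : ∀ x z : E, z ∈ ball (0 : E) 1 → x - ε • z ∈ ball x ε := by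
    intro x z hz
    simp only [mem_ball, dist_zero_right] at hz
    simp only [mem_ball, dist_eq_norm, sub_sub_cancel_left, norm_neg, norm_smul, norm_eq_abs,
      abs_of_pos hε]
    nlinarith
  refine ⟨hcv.comp (by fun_prop), ?_, ?_, ?_, ?_⟩
  · intro x M hM m
    have e1 : iteratedFDeriv ℝ m (V ε h) x = (ε⁻¹) ^ m • iteratedFDeriv ℝ m
        (MeasureTheory.convolution (fun y => h (ε • y)) η
          (ContinuousLinearMap.mul ℝ ℝ) volume) (ε⁻¹ • x) := by
      have := iteratedFDeriv_comp_const_smul (i := m) (ε⁻¹) (hcv.of_le (n := (⊤ : ℕ∞)) (m := m) (by exact_mod_cast le_top))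
      exact congrFun this x
    rw [e1, norm_smul, norm_pow, norm_inv, norm_eq_abs, abs_of_pos hε, mul_right_comm, ← mul_pow,
      inv_mul_cancel₀ hε.ne', one_pow, one_mul]
    refine (conv_iter_bound _ hhε m ℝ ℝ (ContinuousLinearMap.mul ℝ ℝ) η hηc hηs _).trans ?_
    refine (mul_le_of_le_one_left (integral_nonneg fun t => by positivity)
      (ContinuousLinearMap.opNorm_mul_le ℝ ℝ)).trans ?_
    change _ ≤ (∫ t, ‖iteratedFDeriv ℝ m η t‖) * M
    rw [← integral_sub_left_eq_self (fun t => ‖iteratedFDeriv ℝ m η t‖) volume (ε⁻¹ • x),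
      mul_comm _ M, ← integral_const_mul]
    have hcm : Continuous (iteratedFDeriv ℝ m η) :=
      hηc.continuous_iteratedFDeriv (by exact_mod_cast le_top)
    have hcont : Continuous (fun t : E => iteratedFDeriv ℝ m η (ε⁻¹ • x - t)) :=
      hcm.comp (by fun_prop)
    have hcs : HasCompactSupport (fun t : E => iteratedFDeriv ℝ m η (ε⁻¹ • x - t)) :=
      (hηs.iteratedFDeriv (𝕜 := ℝ) m).comp_homeomorph (Homeomorph.subLeft (ε⁻¹ • x))
    apply integral_mono
    · apply Continuous.integrable_of_hasCompactSupport
      · exact (hhε.abs).mul hcont.norm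
      · exact hcs.norm.mul_left
    · apply Integrable.const_mul
      exact Continuous.integrable_of_hasCompactSupport hcont.norm hcs.norm
    · intro t
      by_cases ht : iteratedFDeriv ℝ m η (ε⁻¹ • x - t) = 0
      · simp [ht]
      · have h2 := hηt (support_iteratedFDeriv_subset (𝕜 := ℝ) m ht)
        refine mul_le_mul_of_nonneg_right (hM _ ?_) (norm_nonneg _)
        have h3 : ε⁻¹ • x - t ∈ ball (0 : E) 1 := by
          simp only [mem_closedBall, mem_ball] at h2 ⊢
          linarith
        have := hball x _ h3
        rwa [smul_sub, smul_smul, mul_inv_cancel₀ hε.ne', one_smul, sub_sub_cancel] at this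
  · intro x a ha
    rw [hV ε hε]
    calc a = ∫ z, a * η z := by rw [integral_const_mul, hη1, mul_one]
      _ ≤ _ := by
        apply integral_mono (hηi.const_mul a) (hIntg h hh x)
        intro z
        by_cases hz : z ∈ ball (0 : E) 1
        · exact mul_le_mul_of_nonneg_right (ha _ (hball x z hz)) (hη0 z)
        · simp [hzero z hz]
  · intro x a ha
    rw [hV ε hε]
    calc _ ≤ ∫ z, a * η z := by
          apply integral_mono (hIntg h hh x) (hηi.const_mul a)
          intro z
          by_cases hz : z ∈ ball (0 : E) 1
          · exact mul_le_mul_of_nonneg_right (ha _ (hball x z hz)) (hη0 z)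
          · simp [hzero z hz]
      _ = a := by rw [integral_const_mul, hη1, mul_one]
  · intro x₀ a A x
    rw [hV ε hε h, hV ε hε (fun y => h y - (a + A (y - x₀)))]
    have hodd : ∫ z, A z * η z = 0 := by
      have h1 := integral_neg_eq_self (fun z => A z * η z) (volume : Measure E)
      simp only [map_neg, hηn, neg_mul, integral_neg] at h1
      linarith
    have hiA : Integrable (fun z => A z * η z) :=
      (A.continuous.mul hηc.continuous).integrable_of_hasCompactSupport hηs.mul_left
    have e : ∀ z, (h (x - ε • z) - (a + A (x - ε • z - x₀))) * η z =
        h (x - ε • z) * η z - ((a + A (x - x₀)) * η z - ε * (A z * η z)) := by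
      intro z
      simp only [map_sub, map_smul, smul_eq_mul]
      ring
    simp only [e]
    have hi2 : Integrable (fun z => (a + A (x - x₀)) * η z - ε * (A z * η z)) :=
      (hηi.const_mul _).sub (hiA.const_mul _)
    rw [integral_sub (hIntg h hh x) hi2,
      integral_sub (hηi.const_mul _) (hiA.const_mul _), integral_const_mul, integral_const_mul,
      hodd, hη1]
    ring

end Mollifier

section Regularize

set_option linter.unusedSectionVars false

variable {E : Type} [NormedAddCommGroup E] [InnerProductSpace ℝ E] [FiniteDimensional ℝ E]
  [MeasurableSpace E] [BorelSpace E]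

theorem leibniz_bound (χ a b : E → ℝ) (hχ : ContDiff ℝ (⊤ : ℕ∞) χ) (ha : ContDiff ℝ (⊤ : ℕ∞) a)
    (hb : ContDiff ℝ (⊤ : ℕ∞) b) (x : E) (s M : ℝ) (hs : 0 < s) (A : ℕ → ℝ)
    (h1 : ∀ i, ‖iteratedFDeriv ℝ i χ x‖ * s ^ i ≤ A i)
    (h2 : ∀ i, ‖iteratedFDeriv ℝ i a x‖ * s ^ i ≤ A i * M)
    (h3 : ∀ i, ‖iteratedFDeriv ℝ i b x‖ * s ^ i ≤ A i * M) (m : ℕ) :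
    ‖iteratedFDeriv ℝ m (fun y => a y + χ y * (b y - a y)) x‖ * s ^ m ≤
      (A m + ∑ i ∈ Finset.range (m + 1), (m.choose i : ℝ) * A i * (2 * A (m - i))) * M := by
  have hle : ∀ i : ℕ, ((i : ℕ) : WithTop ℕ∞) ≤ (⊤ : ℕ∞) := fun i => by exact_mod_cast le_top
  have hba : ContDiff ℝ (⊤ : ℕ∞) (fun y => b y - a y) := hb.sub ha
  have e1 : iteratedFDeriv ℝ m (fun y => a y + χ y * (b y - a y)) x =
      iteratedFDeriv ℝ m a x + iteratedFDeriv ℝ m (fun y => χ y * (b y - a y)) x :=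
    iteratedFDeriv_add_apply (ha.contDiffAt.of_le (hle m)) ((hχ.mul hba).contDiffAt.of_le (hle m))
  have h4 : ∀ i, ‖iteratedFDeriv ℝ i (fun y => b y - a y) x‖ * s ^ i ≤ 2 * A i * M := by
    intro i
    have e2 : iteratedFDeriv ℝ i (fun y => b y - a y) x =
        iteratedFDeriv ℝ i b x - iteratedFDeriv ℝ i a x :=
      iteratedFDeriv_sub_apply (hb.contDiffAt.of_le (hle i)) (ha.contDiffAt.of_le (hle i))
    rw [e2]
    have := mul_le_mul_of_nonneg_right
      (norm_sub_le (iteratedFDeriv ℝ i b x) (iteratedFDeriv ℝ i a x)) (pow_pos hs i).le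
    linarith [h2 i, h3 i]
  have h5 := norm_iteratedFDeriv_mul_le hχ hba x (hle m)
  rw [e1]
  have h6 := norm_add_le (iteratedFDeriv ℝ m a x)
    (iteratedFDeriv ℝ m (fun y => χ y * (b y - a y)) x)
  have hsm := (pow_pos hs m).le
  have h7 : (∑ i ∈ Finset.range (m + 1), (m.choose i : ℝ) * ‖iteratedFDeriv ℝ i χ x‖ *
      ‖iteratedFDeriv ℝ (m - i) (fun y => b y - a y) x‖) * s ^ m ≤
      (∑ i ∈ Finset.range (m + 1), (m.choose i : ℝ) * A i * (2 * A (m - i))) * M := by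
    rw [Finset.sum_mul, Finset.sum_mul]
    refine Finset.sum_le_sum fun i hi => ?_
    have him : i ≤ m := by simpa [Nat.lt_succ_iff] using hi
    have hsp : s ^ m = s ^ i * s ^ (m - i) := by rw [← pow_add, Nat.add_sub_cancel' him]
    rw [hsp]
    have hA : 0 ≤ A i := le_trans (by positivity) (h1 i)
    have := mul_le_mul (h1 i) (h4 (m - i)) (by positivity) hA
    have hc : (0 : ℝ) ≤ (m.choose i : ℝ) := by positivity
    have := mul_le_mul_of_nonneg_left this hc
    linarith
  have h8 := mul_le_mul_of_nonneg_right h5 hsm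
  have h9 := mul_le_mul_of_nonneg_right h6 hsm
  linarith [h2 m]

/-- Taylor estimate for C^{1,1} functions. -/
theorem taylor_C11 (f : E → ℝ) (hf : ContDiff ℝ 1 f) (L : ℝ)
    (hL : ∀ x y, ‖fderiv ℝ f x - fderiv ℝ f y‖ ≤ L * ‖x - y‖) (hL0 : 0 ≤ L) (x y : E) :
    |f y - (f x + fderiv ℝ f x (y - x))| ≤ L * ‖y - x‖ ^ 2 := by
  have hd : Differentiable ℝ f := hf.differentiable (by norm_num)
  have := (convex_segment x y).norm_image_sub_le_of_norm_hasFDerivWithin_le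
    (f := fun z => f z - fderiv ℝ f x z) (f' := fun z => fderiv ℝ f z - fderiv ℝ f x)
    (C := L * ‖y - x‖)
    (fun z _ => ((hd z).hasFDerivAt.sub (fderiv ℝ f x).hasFDerivAt).hasFDerivWithinAt)
    (fun z hz => (hL z x).trans (mul_le_mul_of_nonneg_left (by
      have := norm_sub_le_of_mem_segment hz
      simpa using this) hL0))
    (left_mem_segment ℝ x y) (right_mem_segment ℝ x y)
  rw [Real.norm_eq_abs] at this
  have e : f y - (f x + fderiv ℝ f x (y - x)) = f y - fderiv ℝ f x y - (f x - fderiv ℝ f x x) := by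
    rw [map_sub]; ring
  rw [e]
  calc _ ≤ _ := this
    _ = _ := by ring

theorem regularize_core (Ω : Set E) (δ : E → ℝ) (hδ : ∀ x y, δ x ≤ δ y + dist x y)
    (hpos : ∀ x, x ∈ Ω ↔ 0 < δ x)
    (f : E → ℝ) (hf : ContDiff ℝ 1 f) (L : ℝ) (hL0 : 0 ≤ L)
    (hL : ∀ x y, ‖fderiv ℝ f x - fderiv ℝ f y‖ ≤ L * ‖x - y‖)
    (c C : ℝ) (hc : 0 < c) (hC : 0 < C)
    (hlow : ∀ x ∈ Ω, c * δ x ≤ f x) (hup : ∀ x ∈ Ω, f x ≤ C * δ x) :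
    ∃ (ρ : E → ℝ) (B : ℕ → ℝ), (∀ x, x ∉ Ω → ρ x = f x) ∧
      (∀ x ∈ Ω, ContDiffAt ℝ (⊤ : ℕ∞) ρ x) ∧
      (∀ x ∈ Ω, c / 2 * δ x ≤ ρ x ∧ ρ x ≤ 2 * C * δ x) ∧
      ∀ x ∈ Ω, ∀ m : ℕ,
        ‖iteratedFDeriv ℝ m (fun y => ρ y - (f x + fderiv ℝ f x (y - x))) x‖ * δ x ^ m
          ≤ B m * δ x ^ 2 := by
  classical
  obtain ⟨V, Cm, hCm, hV⟩ := exists_mollifier E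
  have hδc : Continuous δ := by
    have : LipschitzWith 1 δ := LipschitzWith.of_le_add hδ
    exact this.continuous
  have hfc : Continuous f := hf.continuous
  -- the cutoffs
  let w : ℤ → E → ℝ := fun n x => max 0 (min 1 ((δ x - 7 / 8 * (2 : ℝ) ^ n) / (1 / 4 * (2 : ℝ) ^ n)))
  have hwc : ∀ n, Continuous (w n) := fun n => by
    have : Continuous (fun x => δ x) := hδc
    fun_prop
  have hr : ∀ n : ℤ, (0 : ℝ) < 2 ^ n := fun n => by positivity
  have hw0 : ∀ n x, 0 ≤ w n x := fun n x => le_max_left _ _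
  have hw1 : ∀ n x, w n x ≤ 1 := fun n x => max_le zero_le_one (min_le_left _ _)
  let χ : ℤ → E → ℝ := fun n => V (2 ^ n / 8) (w n)
  let F : ℤ → E → ℝ := fun n => V (2 ^ n / 8) f
  have hr8 : ∀ n : ℤ, (0 : ℝ) < 2 ^ n / 8 := fun n => by positivity
  have hχs : ∀ n, ContDiff ℝ (⊤ : ℕ∞) (χ n) := fun n => (hV _ (hr8 n) _ (hwc n)).1
  have hFs : ∀ n, ContDiff ℝ (⊤ : ℕ∞) (F n) := fun n => (hV _ (hr8 n) _ hfc).1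
  have hχ0 : ∀ n x, 0 ≤ χ n x := fun n x =>
    (hV _ (hr8 n) _ (hwc n)).2.2.1 x 0 (fun y _ => hw0 n y)
  have hχ1 : ∀ n x, χ n x ≤ 1 := fun n x =>
    (hV _ (hr8 n) _ (hwc n)).2.2.2.1 x 1 (fun y _ => hw1 n y)
  have hχz : ∀ n x, δ x ≤ 3 / 4 * 2 ^ n → χ n x = 0 := by
    intro n x hx
    refine le_antisymm ((hV _ (hr8 n) _ (hwc n)).2.2.2.1 x 0 (fun y hy => ?_)) (hχ0 n x)
    have h1 := hδ y x
    rw [mem_ball] at hy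
    refine max_le le_rfl (min_le_of_right_le ?_)
    apply div_nonpos_of_nonpos_of_nonneg
    · linarith
    · have := hr n; positivity
  have hχo : ∀ n x, 5 / 4 * 2 ^ n ≤ δ x → χ n x = 1 := by
    intro n x hx
    refine le_antisymm (hχ1 n x) ((hV _ (hr8 n) _ (hwc n)).2.2.1 x 1 (fun y hy => ?_))
    have h1 := hδ x y
    rw [mem_ball, dist_comm] at hy
    refine le_max_of_le_right (le_min le_rfl ?_)
    rw [le_div_iff₀ (by have := hr n; positivity)]
    linarith
  let R : ℤ → E → ℝ := fun n x => F n x + χ n x * (F (n + 1) x - F n x)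
  have hRs : ∀ n, ContDiff ℝ (⊤ : ℕ∞) (R n) := fun n =>
    (hFs n).add ((hχs n).mul ((hFs (n + 1)).sub (hFs n)))
  have hsucc : ∀ n : ℤ, (2 : ℝ) ^ (n + 1) = 2 * 2 ^ n := fun n => by
    rw [zpow_add₀ (by norm_num)]; ring
  -- index choice
  have hex : ∀ x, x ∈ Ω → ∃ n : ℤ, 3 / 4 * (2 : ℝ) ^ n ≤ δ x ∧ δ x < 3 / 2 * 2 ^ n := by
    intro x hx
    have hx' := (hpos x).1 hx
    obtain ⟨n, h1, h2⟩ := exists_mem_Ico_zpow (x := 4 / 3 * δ x) (y := (2 : ℝ)) (by positivity)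
      (by norm_num)
    rw [hsucc] at h2
    exact ⟨n, by linarith, by linarith⟩
  let N : E → ℤ := fun x => if hx : x ∈ Ω then (hex x hx).choose else 0
  have hN : ∀ x, x ∈ Ω → 3 / 4 * (2 : ℝ) ^ N x ≤ δ x ∧ δ x < 3 / 2 * 2 ^ N x := by
    intro x hx
    simp only [N, dif_pos hx]
    exact (hex x hx).choose_spec
  let ρ : E → ℝ := fun x => if x ∈ Ω then R (N x) x else f x
  have hρR : ∀ (n : ℤ) (x : E), 5 / 8 * (2 : ℝ) ^ n < δ x → δ x < 3 / 2 * 2 ^ n → ρ x = R n x := by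
    intro n x h1 h2
    have hx : x ∈ Ω := (hpos x).2 (lt_trans (by positivity) h1)
    obtain ⟨h3, h4⟩ := hN x hx
    simp only [ρ, if_pos hx]
    have h5 : N x < n + 1 := by
      rw [← zpow_lt_zpow_iff_right₀ (a := (2 : ℝ)) (by norm_num), hsucc]
      linarith
    have h6 : n - 1 < N x + 1 := by
      rw [← zpow_lt_zpow_iff_right₀ (a := (2 : ℝ)) (by norm_num), hsucc]
      have := hsucc (n - 1)
      rw [sub_add_cancel] at this
      have := hr n
      linarith
    rcases (show N x = n ∨ n = N x + 1 by omega) with h | h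
    · rw [h]
    · have h7 := hsucc (N x)
      rw [h, h7] at h1
      simp only [R]
      rw [hχo (N x) x (by linarith), hχz n x (by rw [h, h7]; linarith), h]
      ring
  have hev : ∀ x, x ∈ Ω → ∃ n : ℤ, 5 / 8 * (2 : ℝ) ^ n < δ x ∧ δ x < 3 / 2 * 2 ^ n ∧
      ρ =ᶠ[𝓝 x] R n := by
    intro x hx
    obtain ⟨h3, h4⟩ := hN x hx
    have h5 : 5 / 8 * (2 : ℝ) ^ N x < δ x := by have := hr (N x); linarith
    refine ⟨N x, h5, h4, ?_⟩
    filter_upwards [hδc.continuousAt.eventually (lt_mem_nhds h5),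
      hδc.continuousAt.eventually (gt_mem_nhds h4)] with y hy1 hy2
    exact hρR _ y hy1 hy2
  let A : ℕ → ℝ := fun m => 12 ^ m * Cm m
  refine ⟨ρ, fun m => (A m + ∑ i ∈ Finset.range (m + 1), (m.choose i : ℝ) * A i * (2 * A (m - i))) * L,
    fun x hx => if_neg hx, ?_, ?_, ?_⟩
  · intro x hx
    obtain ⟨n, -, -, h⟩ := hev x hx
    exact (hRs n).contDiffAt.congr_of_eventuallyEq h
  · intro x hx
    obtain ⟨n, h1, h2, h⟩ := hev x hx
    rw [h.eq_of_nhds]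
    have hn := hr n
    have key : ∀ k : ℤ, (2 : ℝ) ^ k / 8 ≤ 2 ^ n / 4 → c / 2 * δ x ≤ F k x ∧ F k x ≤ 2 * C * δ x := by
      intro k hk
      have hb : ∀ y ∈ ball x ((2 : ℝ) ^ k / 8), δ x / 2 ≤ δ y ∧ δ y ≤ 2 * δ x := by
        intro y hy
        rw [mem_ball] at hy
        have e1 := hδ x y
        have e2 := hδ y x
        rw [dist_comm] at e1
        constructor <;> linarith
      have hxp := (hpos x).1 hx
      constructor
      · refine (hV _ (hr8 k) _ hfc).2.2.1 x _ (fun y hy => ?_)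
        obtain ⟨e1, e2⟩ := hb y hy
        have := hlow y ((hpos y).2 (by linarith))
        nlinarith
      · refine (hV _ (hr8 k) _ hfc).2.2.2.1 x _ (fun y hy => ?_)
        obtain ⟨e1, e2⟩ := hb y hy
        have := hup y ((hpos y).2 (by linarith))
        nlinarith
    obtain ⟨a1, a2⟩ := key n (by linarith)
    obtain ⟨b1, b2⟩ := key (n + 1) (by rw [hsucc]; linarith)
    have c0 := hχ0 n x
    have c1 := hχ1 n x
    simp only [R]
    constructor <;> nlinarith
  · intro x hx m
    obtain ⟨n, h1, h2, h⟩ := hev x hx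
    have hn := hr n
    have hxp := (hpos x).1 hx
    set P : E → ℝ := fun y => f x + fderiv ℝ f x (y - x) with hP
    let G : E → ℝ := fun y => f y - (f x + fderiv ℝ f x (y - x))
    have hGc : Continuous G := by fun_prop
    have hVG : ∀ k : ℤ, ∀ y, V (2 ^ k / 8) G y = F k y - P y := fun k y =>
      (hV _ (hr8 k) _ hfc).2.2.2.2 x (f x) (fderiv ℝ f x) y
    have e : (fun y => ρ y - (f x + fderiv ℝ f x (y - x))) =ᶠ[𝓝 x]
        fun y => V (2 ^ n / 8) G y + χ n y * (V (2 ^ (n + 1) / 8) G y - V (2 ^ n / 8) G y) := by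
      filter_upwards [h] with y hy
      rw [hy, hVG, hVG]
      simp only [R, hP]
      ring
    rw [(e.iteratedFDeriv ℝ m).eq_of_nhds, mul_assoc _ L]
    have scale : ∀ (s T : ℝ) (i : ℕ) (M : ℝ), 0 ≤ T → 0 < s → δ x ≤ 12 * s → T * s ^ i ≤ Cm i * M →
        T * δ x ^ i ≤ A i * M := by
      intro s T i M hT hs hds hle
      have : δ x ^ i ≤ (12 * s) ^ i := pow_le_pow_left₀ hxp.le hds i
      calc T * δ x ^ i ≤ T * (12 * s) ^ i := mul_le_mul_of_nonneg_left this hT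
        _ = 12 ^ i * (T * s ^ i) := by rw [mul_pow]; ring
        _ ≤ 12 ^ i * (Cm i * M) := mul_le_mul_of_nonneg_left hle (by positivity)
        _ = A i * M := by simp only [A]; ring
    have hGb : ∀ k : ℤ, (2 : ℝ) ^ k / 8 ≤ 2 ^ n / 4 → ∀ y ∈ ball x ((2 : ℝ) ^ k / 8),
        |G y| ≤ L * δ x ^ 2 := by
      intro k hk y hy
      refine (taylor_C11 f hf L hL hL0 x y).trans (mul_le_mul_of_nonneg_left ?_ hL0)
      rw [mem_ball, dist_eq_norm] at hy
      exact pow_le_pow_left₀ (norm_nonneg _) (by linarith) 2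
    refine leibniz_bound (χ n) _ _ (hχs n) (hV _ (hr8 n) _ hGc).1 (hV _ (hr8 (n + 1)) _ hGc).1 x
      (δ x) (L * δ x ^ 2) hxp A ?_ ?_ ?_ m
    · intro i
      have := scale (2 ^ n / 8) _ i 1 (norm_nonneg _) (hr8 n) (by linarith)
        ((hV _ (hr8 n) _ (hwc n)).2.1 x 1 (fun y _ => by
          rw [abs_of_nonneg (hw0 n y)]; exact hw1 n y) i)
      simpa using this
    · intro i
      exact scale (2 ^ n / 8) _ i _ (norm_nonneg _) (hr8 n) (by linarith)
        ((hV _ (hr8 n) _ hGc).2.1 x _ (hGb n (by linarith)) i)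
    · intro i
      exact scale (2 ^ (n + 1) / 8) _ i _ (norm_nonneg _) (hr8 (n + 1)) (by rw [hsucc]; linarith)
        ((hV _ (hr8 (n + 1)) _ hGc).2.1 x _ (hGb (n + 1) (by rw [hsucc]; linarith)) i)

theorem regularize_full (Ω : Set E) (δ : E → ℝ) (hδ : ∀ x y, δ x ≤ δ y + dist x y)
    (hpos : ∀ x, x ∈ Ω ↔ 0 < δ x) (hδ0 : ∀ x, x ∉ Ω → δ x = 0)
    (f : E → ℝ) (hf : ContDiff ℝ 1 f) (L : ℝ) (hL0 : 0 ≤ L)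
    (hL : ∀ x y, ‖fderiv ℝ f x - fderiv ℝ f y‖ ≤ L * ‖x - y‖)
    (c C : ℝ) (hc : 0 < c) (hC : 0 < C)
    (hlow : ∀ x ∈ Ω, c * δ x ≤ f x) (hup : ∀ x ∈ Ω, f x ≤ C * δ x) :
    ∃ (ρ : E → ℝ) (L' : ℝ), ContDiff ℝ 1 ρ ∧ LipschitzWith (Real.toNNReal L') (fderiv ℝ ρ) ∧
      ContDiffOn ℝ (⊤ : ℕ∞) ρ Ω ∧
      (∀ x ∈ Ω, c / 2 * δ x ≤ ρ x ∧ ρ x ≤ 2 * C * δ x) ∧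
      (∀ x, x ∉ Ω → fderiv ℝ ρ x = fderiv ℝ f x) ∧
      ∀ k : ℕ, ∃ B : ℝ, ∀ x ∈ Ω, ‖iteratedFDeriv ℝ (k + 2) ρ x‖ * (ρ x) ^ k ≤ B := by
  obtain ⟨ρ, B, hout, hsm, hcmp, hB⟩ :=
    regularize_core Ω δ hδ hpos f hf L hL0 hL c C hc hC hlow hup
  have hle : ∀ i : ℕ, ((i : ℕ) : WithTop ℕ∞) ≤ (⊤ : ℕ∞) := fun i => by exact_mod_cast le_top
  have hdf : Differentiable ℝ f := hf.differentiable (by norm_num)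
  have hδd : ∀ x z, z ∉ Ω → δ x ≤ dist x z := by
    intro x z hz
    have := hδ x z
    rw [hδ0 z hz] at this
    linarith
  have hδn : ∀ x, 0 ≤ δ x := by
    intro x
    by_cases hx : x ∈ Ω
    · exact ((hpos x).1 hx).le
    · rw [hδ0 x hx]
  have hdΩ : ∀ x ∈ Ω, DifferentiableAt ℝ ρ x := fun x hx =>
    (hsm x hx).differentiableAt (by simp)
  -- order zero
  have h0 : ∀ x, |ρ x - f x| ≤ |B 0| * δ x ^ 2 := by
    intro x
    by_cases hx : x ∈ Ω
    · have := hB x hx 0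
      simp only [norm_iteratedFDeriv_zero, pow_zero, mul_one, sub_self, map_zero, add_zero,
        norm_eq_abs] at this
      exact this.trans (mul_le_mul_of_nonneg_right (le_abs_self _) (by positivity))
    · rw [hout x hx, sub_self, abs_zero]; positivity
  -- order one
  have haff : ∀ (x y : E), HasFDerivAt (fun y => f x + fderiv ℝ f x (y - x)) (fderiv ℝ f x) y := by
    intro x y
    have := ((fderiv ℝ f x).hasFDerivAt.comp y ((hasFDerivAt_id y).sub_const x)).const_add (f x)
    simpa using this
  have h1 : ∀ x ∈ Ω, ‖fderiv ℝ ρ x - fderiv ℝ f x‖ ≤ |B 1| * δ x := by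
    intro x hx
    have hp := (hpos x).1 hx
    have := hB x hx 1
    have hd1 : fderiv ℝ (fun y => ρ y - (f x + fderiv ℝ f x (y - x))) x =
        fderiv ℝ ρ x - fderiv ℝ f x := ((hdΩ x hx).hasFDerivAt.sub (haff x x)).fderiv
    rw [norm_iteratedFDeriv_one, hd1, pow_one] at this
    have h2 : ‖fderiv ℝ ρ x - fderiv ℝ f x‖ ≤ B 1 * δ x := by
      nlinarith
    exact h2.trans (mul_le_mul_of_nonneg_right (le_abs_self _) hp.le)
  -- higher order
  have h2 : ∀ k : ℕ, ∀ x ∈ Ω, ‖iteratedFDeriv ℝ (k + 2) ρ x‖ * δ x ^ k ≤ |B (k + 2)| := by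
    intro k x hx
    have hp := (hpos x).1 hx
    have h3 := hB x hx (k + 2)
    have hPz : iteratedFDeriv ℝ (k + 2) (fun y => f x + fderiv ℝ f x (y - x)) x = 0 := by
      rw [← norm_eq_zero, ← norm_iteratedFDeriv_fderiv]
      have : fderiv ℝ (fun y => f x + fderiv ℝ f x (y - x)) = fun _ => fderiv ℝ f x := by
        funext y; exact (haff x y).fderiv
      rw [this, iteratedFDeriv_succ_const]
      simp
    have hPc : ContDiffAt ℝ ((k + 2 : ℕ) : WithTop ℕ∞) (fun y => f x + fderiv ℝ f x (y - x)) x := by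
      fun_prop
    have e : iteratedFDeriv ℝ (k + 2) (fun y => ρ y - (f x + fderiv ℝ f x (y - x))) x =
        iteratedFDeriv ℝ (k + 2) ρ x - iteratedFDeriv ℝ (k + 2)
          (fun y => f x + fderiv ℝ f x (y - x)) x :=
      iteratedFDeriv_sub_apply ((hsm x hx).of_le (hle _)) hPc
    rw [e, hPz, sub_zero, pow_add, ← mul_assoc] at h3
    exact (le_of_mul_le_mul_right h3 (by positivity)).trans (le_abs_self _)
  have hder : ∀ x, x ∉ Ω → HasFDerivAt ρ (fderiv ℝ f x) x := by
    intro x hx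
    have hO : (fun y => ρ y - f y) =O[𝓝 x] fun y => ‖y - x‖ ^ 2 := by
      refine Asymptotics.IsBigO.of_bound |B 0| (Filter.Eventually.of_forall fun y => ?_)
      rw [norm_pow, norm_norm, norm_eq_abs]
      refine (h0 y).trans (mul_le_mul_of_nonneg_left ?_ (abs_nonneg _))
      rw [← dist_eq_norm]
      exact pow_le_pow_left₀ (hδn y) (hδd y x hx) 2
    have hg := hO.hasFDerivAt (𝕜 := ℝ) (by norm_num)
    have := hg.add (hdf x).hasFDerivAt
    rw [zero_add] at this
    have e : ((fun y => ρ y - f y) + f) = ρ := by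
      funext y
      simp
    rwa [e] at this
  have hfd : ∀ x, x ∉ Ω → fderiv ℝ ρ x = fderiv ℝ f x := fun x hx => (hder x hx).fderiv
  have hdiff : Differentiable ℝ ρ := by
    intro x
    by_cases hx : x ∈ Ω
    · exact hdΩ x hx
    · exact (hder x hx).differentiableAt
  have hfz : ∀ x z, z ∉ Ω → ‖fderiv ℝ ρ x - fderiv ℝ f z‖ ≤ (|B 1| + L) * ‖x - z‖ := by
    intro x z hz
    by_cases hx : x ∈ Ω
    · have e1 := h1 x hx
      have e2 := hL x z
      have e3 := hδd x z hz
      rw [dist_eq_norm] at e3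
      calc ‖fderiv ℝ ρ x - fderiv ℝ f z‖
          = ‖(fderiv ℝ ρ x - fderiv ℝ f x) + (fderiv ℝ f x - fderiv ℝ f z)‖ := by
            rw [sub_add_sub_cancel]
        _ ≤ |B 1| * δ x + L * ‖x - z‖ := (norm_add_le _ _).trans (add_le_add e1 e2)
        _ ≤ |B 1| * ‖x - z‖ + L * ‖x - z‖ := by gcongr
        _ = _ := by ring
    · rw [hfd x hx]
      refine (hL x z).trans ?_
      gcongr
      linarith [abs_nonneg (B 1)]
  let L' : ℝ := |B 2| + 2 * (|B 1| + L)
  have hL'0 : 0 ≤ L' := by positivity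
  have hlip : LipschitzWith (Real.toNNReal L') (fderiv ℝ ρ) := by
    refine LipschitzWith.of_dist_le_mul fun x y => ?_
    rw [Real.coe_toNNReal _ hL'0, dist_eq_norm, dist_eq_norm]
    by_cases hseg : segment ℝ x y ⊆ Ω
    · have := (convex_segment x y).norm_image_sub_le_of_norm_hasFDerivWithin_le
        (f := fderiv ℝ ρ) (f' := fun z => fderiv ℝ (fderiv ℝ ρ) z) (C := |B 2|)
        (fun z hz => by
          have hz' : DifferentiableAt ℝ (fderiv ℝ ρ) z := by
            have : ContDiffAt ℝ 1 (fderiv ℝ ρ) z :=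
              ((hsm z (hseg hz)).of_le (hle 2)).fderiv_right (by norm_num)
            exact this.differentiableAt (by norm_num)
          exact hz'.hasFDerivAt.hasFDerivWithinAt)
        (fun z hz => by
          have := h2 0 z (hseg hz)
          rw [zero_add, pow_zero, mul_one, ← norm_iteratedFDeriv_fderiv,
            norm_iteratedFDeriv_one] at this
          exact this)
        (right_mem_segment ℝ x y) (left_mem_segment ℝ x y)
      refine this.trans (mul_le_mul_of_nonneg_right ?_ (norm_nonneg _))
      simp only [L']
      linarith [abs_nonneg (B 1)]
    · obtain ⟨z, hz, hzΩ⟩ := Set.not_subset.1 hseg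
      have e1 := hfz x z hzΩ
      have e2 := hfz y z hzΩ
      have e3 : ‖x - z‖ ≤ ‖x - y‖ := by
        have := norm_sub_le_of_mem_segment hz
        rwa [norm_sub_rev, norm_sub_rev y x] at this
      have e4 : ‖y - z‖ ≤ ‖x - y‖ := by
        rw [segment_symm] at hz
        have := norm_sub_le_of_mem_segment hz
        rwa [norm_sub_rev] at this
      have hq : 0 ≤ |B 1| + L := by positivity
      calc ‖fderiv ℝ ρ x - fderiv ℝ ρ y‖
          = ‖(fderiv ℝ ρ x - fderiv ℝ f z) - (fderiv ℝ ρ y - fderiv ℝ f z)‖ := by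
            rw [sub_sub_sub_cancel_right]
        _ ≤ (|B 1| + L) * ‖x - z‖ + (|B 1| + L) * ‖y - z‖ :=
            (norm_sub_le _ _).trans (add_le_add e1 e2)
        _ ≤ (|B 1| + L) * ‖x - y‖ + (|B 1| + L) * ‖x - y‖ := by gcongr
        _ ≤ L' * ‖x - y‖ := by
            simp only [L']
            nlinarith [abs_nonneg (B 2), norm_nonneg (x - y),
              mul_nonneg (abs_nonneg (B 2)) (norm_nonneg (x - y))]
  refine ⟨ρ, L', contDiff_one_iff_fderiv.2 ⟨hdiff, hlip.continuous⟩, hlip,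
    fun x hx => (hsm x hx).contDiffWithinAt, hcmp, hfd, ?_⟩
  intro k
  refine ⟨|B (k + 2)| * (2 * C) ^ k, fun x hx => ?_⟩
  have hp := (hpos x).1 hx
  obtain ⟨q1, q2⟩ := hcmp x hx
  have q0 : 0 ≤ ρ x := le_trans (by positivity) q1
  calc ‖iteratedFDeriv ℝ (k + 2) ρ x‖ * ρ x ^ k
      ≤ ‖iteratedFDeriv ℝ (k + 2) ρ x‖ * (2 * C * δ x) ^ k := by gcongr
    _ = (‖iteratedFDeriv ℝ (k + 2) ρ x‖ * δ x ^ k) * (2 * C) ^ k := by rw [mul_pow]; ring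
    _ ≤ _ := by
      have := h2 k x hx
      gcongr

end Regularize

section Defining

set_option linter.unusedSectionVars false

variable {E : Type} [NormedAddCommGroup E] [InnerProductSpace ℝ E] [FiniteDimensional ℝ E]
  [MeasurableSpace E] [BorelSpace E]

/-- Globally `C^1` with Lipschitz derivative. -/
def HasC11 (h : E → ℝ) : Prop :=
  ContDiff ℝ 1 h ∧ ∃ L : NNReal, LipschitzWith L (fderiv ℝ h)

theorem HasC11.sum {ι : Type} (T : Finset ι) (h : ι → E → ℝ) (hh : ∀ i ∈ T, HasC11 (h i)) :
    HasC11 (fun y => ∑ i ∈ T, h i y) := by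
  classical
  induction T using Finset.induction_on with
  | empty =>
    refine ⟨by simpa using contDiff_const, 0, ?_⟩
    simp only [Finset.sum_empty]
    have : fderiv ℝ (fun _ : E => (0 : ℝ)) = fun _ => 0 := by funext y; simp
    rw [this]
    exact LipschitzWith.const _
  | insert a s ha ih =>
    obtain ⟨h1, L1, h2⟩ := hh a (Finset.mem_insert_self a s)
    obtain ⟨h3, L2, h4⟩ := ih (fun i hi => hh i (Finset.mem_insert_of_mem hi))
    simp only [Finset.sum_insert ha]
    refine ⟨h1.add h3, L1 + L2, ?_⟩
    have : fderiv ℝ (fun y => h a y + ∑ i ∈ s, h i y) =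
        fun y => fderiv ℝ (h a) y + fderiv ℝ (fun y => ∑ i ∈ s, h i y) y := by
      funext y
      exact fderiv_fun_add (h1.differentiable (by norm_num) y) (h3.differentiable (by norm_num) y)
    rw [this]
    exact h2.add h4

theorem lip_bilin {F₁ F₂ F₃ : Type} [NormedAddCommGroup F₁] [NormedSpace ℝ F₁]
    [NormedAddCommGroup F₂] [NormedSpace ℝ F₂] [NormedAddCommGroup F₃] [NormedSpace ℝ F₃]
    (β : F₁ →L[ℝ] F₂ →L[ℝ] F₃) (a : E → F₁) (b : E → F₂) (S : Set E) (La Ma Lb Mb : ℝ)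
    (hLa : 0 ≤ La) (hMa : 0 ≤ Ma) (hLb : 0 ≤ Lb) (hMb : 0 ≤ Mb)
    (ha : ∀ x y, ‖a x - a y‖ ≤ La * ‖x - y‖) (ha' : ∀ x, ‖a x‖ ≤ Ma)
    (ha0 : ∀ x, x ∉ S → a x = 0)
    (hb : ∀ x ∈ S, ∀ y ∈ S, ‖b x - b y‖ ≤ Lb * ‖x - y‖) (hb' : ∀ x ∈ S, ‖b x‖ ≤ Mb) :
    ∃ C : NNReal, LipschitzWith C (fun x => β (a x) (b x)) := by
  let C : ℝ := ‖β‖ * (La * Mb) + ‖β‖ * (Ma * Lb)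
  have hC : 0 ≤ C := by positivity
  have key : ∀ x y, x ∈ S → ‖β (a x) (b x) - β (a y) (b y)‖ ≤ C * ‖x - y‖ := by
    intro x y hx
    by_cases hy : y ∈ S
    · have e : β (a x) (b x) - β (a y) (b y) = β (a x - a y) (b x) + β (a y) (b x - b y) := by
        simp
      rw [e]
      have e1 := β.le_opNorm₂ (a x - a y) (b x)
      have e2 := β.le_opNorm₂ (a y) (b x - b y)
      have e3 : ‖β‖ * ‖a x - a y‖ * ‖b x‖ ≤ ‖β‖ * (La * ‖x - y‖) * Mb := by
        gcongr
        · exact ha x y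
        · exact hb' x hx
      have e4 : ‖β‖ * ‖a y‖ * ‖b x - b y‖ ≤ ‖β‖ * Ma * (Lb * ‖x - y‖) := by
        gcongr
        · exact ha' y
        · exact hb x hx y hy
      calc _ ≤ _ := norm_add_le _ _
        _ ≤ ‖β‖ * (La * ‖x - y‖) * Mb + ‖β‖ * Ma * (Lb * ‖x - y‖) := by linarith
        _ = C * ‖x - y‖ := by simp only [C]; ring
    · have e : β (a x) (b x) - β (a y) (b y) = β (a x - a y) (b x) := by
        simp [ha0 y hy]
      rw [e]
      have e1 := β.le_opNorm₂ (a x - a y) (b x)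
      have e3 : ‖β‖ * ‖a x - a y‖ * ‖b x‖ ≤ ‖β‖ * (La * ‖x - y‖) * Mb := by
        gcongr
        · exact ha x y
        · exact hb' x hx
      have e4 : 0 ≤ ‖β‖ * (Ma * Lb) * ‖x - y‖ := by positivity
      calc _ ≤ _ := e1
        _ ≤ _ := e3
        _ ≤ C * ‖x - y‖ := by simp only [C]; linarith
  refine ⟨C.toNNReal, LipschitzWith.of_dist_le_mul fun x y => ?_⟩
  rw [Real.coe_toNNReal _ hC, dist_eq_norm, dist_eq_norm]
  by_cases hx : x ∈ S
  · exact key x y hx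
  · by_cases hy : y ∈ S
    · rw [norm_sub_rev, norm_sub_rev x y]
      exact key y x hy
    · simp only [ha0 x hx, ha0 y hy, map_zero, ContinuousLinearMap.zero_apply, sub_self, norm_zero]
      positivity

theorem HasC11.bump_mul (x : E) (r : ℝ) (hr : 0 < r) (χ : E → ℝ) (hχ : ContDiff ℝ (⊤ : ℕ∞) χ)
    (hχs : HasCompactSupport χ) (hχb : tsupport χ ⊆ ball x r)
    (g : E → ℝ) (hg : ContDiff ℝ 1 g) (K : ℝ) (hK : 0 ≤ K)
    (hgL : ∀ x y, ‖fderiv ℝ g x - fderiv ℝ g y‖ ≤ K * ‖x - y‖) :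
    HasC11 (fun y => χ y * g y) := by
  have hχ1 : ContDiff ℝ 1 χ := hχ.of_le (by exact_mod_cast le_top)
  have hdχ : ContDiff ℝ 1 (fderiv ℝ χ) := (show ContDiff ℝ (⊤:ℕ∞) (fderiv ℝ χ) from hχ.fderiv_right (by simp)).of_le (by exact_mod_cast le_top)
  have hgd : Differentiable ℝ g := hg.differentiable (by norm_num)
  obtain ⟨L1, hL1⟩ := hχ1.lipschitzWith_of_hasCompactSupport hχs (by norm_num)
  obtain ⟨L2, hL2⟩ := hdχ.lipschitzWith_of_hasCompactSupport (hχs.fderiv (𝕜 := ℝ)) (by norm_num)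
  obtain ⟨M1, hM1⟩ := hχ.continuous.bounded_above_of_compact_support hχs
  obtain ⟨M2, hM2⟩ := hdχ.continuous.bounded_above_of_compact_support (hχs.fderiv (𝕜 := ℝ))
  let N1 : ℝ := ‖fderiv ℝ g x‖ + K * r
  have hN1 : 0 ≤ N1 := by positivity
  have hgb : ∀ y ∈ ball x r, ‖fderiv ℝ g y‖ ≤ N1 := by
    intro y hy
    rw [mem_ball, dist_eq_norm] at hy
    have e1 := hgL y x
    have e2 := norm_le_norm_add_norm_sub' (fderiv ℝ g y) (fderiv ℝ g x)
    have e3 : K * ‖y - x‖ ≤ K * r := by gcongr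
    simp only [N1]; linarith
  have hgl : ∀ y ∈ ball x r, ∀ z ∈ ball x r, ‖g y - g z‖ ≤ N1 * ‖y - z‖ := by
    intro y hy z hz
    exact (convex_ball x r).norm_image_sub_le_of_norm_fderiv_le (𝕜 := ℝ) (fun w _ => hgd w)
      hgb hz hy
  have hgb0 : ∀ y ∈ ball x r, ‖g y‖ ≤ ‖g x‖ + N1 * r := by
    intro y hy
    have e1 := hgl y hy x (mem_ball_self hr)
    rw [mem_ball, dist_eq_norm] at hy
    have e2 := norm_le_norm_add_norm_sub' (g y) (g x)
    have e3 : N1 * ‖y - x‖ ≤ N1 * r := by gcongr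
    linarith
  obtain ⟨C1, hC1⟩ := lip_bilin (ContinuousLinearMap.lsmul ℝ ℝ) χ (fderiv ℝ g) (ball x r) L1
    M1 K N1 L1.2 ((norm_nonneg _).trans (hM1 x)) hK hN1
    (fun y z => by simpa [dist_eq_norm] using hL1.dist_le_mul y z) hM1
    (fun y hy => image_eq_zero_of_notMem_tsupport fun h => hy (hχb h))
    (fun y _ z _ => hgL y z) hgb
  obtain ⟨C2, hC2⟩ := lip_bilin (ContinuousLinearMap.lsmul ℝ ℝ).flip (fderiv ℝ χ) g (ball x r) L2
    M2 N1 (‖g x‖ + N1 * r) L2.2 ((norm_nonneg _).trans (hM2 x)) hN1 (by positivity)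
    (fun y z => by simpa [dist_eq_norm] using hL2.dist_le_mul y z) hM2
    (fun y hy => image_eq_zero_of_notMem_tsupport fun h => hy (hχb (tsupport_fderiv_subset ℝ h)))
    hgl hgb0
  refine ⟨hχ1.mul hg, C1 + C2, ?_⟩
  have : fderiv ℝ (fun y => χ y * g y) = fun y =>
      (ContinuousLinearMap.lsmul ℝ ℝ (χ y)) (fderiv ℝ g y) +
      ((ContinuousLinearMap.lsmul ℝ ℝ).flip (fderiv ℝ χ y)) (g y) := by
    funext y
    rw [fderiv_fun_mul (hχ1.differentiable (by norm_num) y) (hgd y)]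
    rfl
  rw [this]
  exact hC1.add hC2

theorem exists_unit_dir (A : E →L[ℝ] ℝ) (hA : 0 < ‖A‖) : ∃ v : E, ‖v‖ = 1 ∧ A v = ‖A‖ := by
  let w := (InnerProductSpace.toDual ℝ E).symm A
  have hw : ‖w‖ = ‖A‖ := LinearIsometryEquiv.norm_map _ _
  refine ⟨‖A‖⁻¹ • w, ?_, ?_⟩
  · rw [norm_smul, hw, norm_inv, norm_norm, inv_mul_cancel₀ hA.ne']
  · have : A w = ‖A‖ ^ 2 := by
      rw [← hw, ← real_inner_self_eq_norm_sq]
      exact (InnerProductSpace.toDual_symm_apply (𝕜 := ℝ) (x := w) (y := A)).symm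
    rw [map_smul, this, smul_eq_mul]
    field_simp

/-- The properties of one piece of the defining function. -/
def IsPiece (Ω : Set E) (δ : E → ℝ) (x : E) (s : ℝ) (h : E → ℝ) (c : ℝ) : Prop :=
  HasC11 h ∧ HasCompactSupport h ∧ (∀ y ∈ Ω, 0 ≤ h y) ∧ (∀ y ∈ frontier Ω, h y = 0) ∧
    (∀ y ∈ Ω, y ∈ ball x s → c * δ y ≤ h y) ∧
    ∀ y ∈ frontier Ω, y ∈ ball x s → ∃ v : E, ‖v‖ = 1 ∧
      ∀ᶠ t : ℝ in 𝓝[>] 0, y + t • v ∈ Ω ∧ c * t ≤ h (y + t • v)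

theorem exists_piece_interior (Ω : Set E) (hΩ : IsOpen Ω) (δ : E → ℝ) (D : ℝ) (hD : 0 < D)
    (hδD : ∀ x, δ x ≤ D) (x : E) (hx : x ∈ Ω) :
    ∃ (s : ℝ) (h : E → ℝ) (c : ℝ), 0 < s ∧ 0 < c ∧ IsPiece Ω δ x s h c := by
  obtain ⟨s, hs, hsub⟩ := Metric.isOpen_iff.1 hΩ x hx
  let φ : ContDiffBump x := ⟨s / 4, s / 2, by positivity, by linarith⟩
  have hfr : ∀ y ∈ frontier Ω, y ∉ ball x s := by
    intro y hy hyb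
    rw [hΩ.frontier_eq] at hy
    exact hy.2 (hsub hyb)
  have hc11 := HasC11.bump_mul x s hs φ φ.contDiff φ.hasCompactSupport
    (by rw [φ.tsupport_eq]; exact closedBall_subset_ball (by change s / 2 < s; linarith))
    (fun _ => 1) contDiff_const 0 le_rfl (by simp)
  refine ⟨s / 4, φ, D⁻¹, by positivity, by positivity, by simpa using hc11, φ.hasCompactSupport,
    fun y _ => φ.nonneg, ?_, ?_, ?_⟩
  · intro y hy
    apply φ.zero_of_le_dist
    have := hfr y hy
    rw [mem_ball, not_lt] at this
    change s / 2 ≤ _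
    linarith
  · intro y hy hyb
    rw [φ.one_of_mem_closedBall (ball_subset_closedBall hyb), inv_mul_le_iff₀ hD, mul_one]
    exact hδD y
  · intro y hy hyb
    exact absurd (ball_subset_ball (by linarith) hyb) (hfr y hy)

theorem exists_piece_boundary (Ω : Set E) (δ : E → ℝ) (D : ℝ) (hD : 0 < D)
    (hδD : ∀ x, δ x ≤ D) (hδd : ∀ x z, z ∉ Ω → δ x ≤ dist x z) (x : E) (K : ℝ) (hK : 0 < K)
    (g : E → ℝ) (r : ℝ) (hr : 0 < r) (hg : ContDiff ℝ 1 g)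
    (hgL : ∀ x y, ‖fderiv ℝ g x - fderiv ℝ g y‖ ≤ K * ‖x - y‖)
    (hgK : ∀ y ∈ ball x r, K⁻¹ ≤ ‖fderiv ℝ g y‖)
    (hin : ∀ y ∈ ball x r, y ∈ Ω ↔ 0 < g y)
    (hfr : ∀ y ∈ ball x r, y ∈ frontier Ω → g y = 0) :
    ∃ (s : ℝ) (h : E → ℝ) (c : ℝ), 0 < s ∧ 0 < c ∧ IsPiece Ω δ x s h c := by
  let φ : ContDiffBump x := ⟨r / 4, r / 2, by positivity, by linarith⟩
  have hc11 := HasC11.bump_mul x r hr φ φ.contDiff φ.hasCompactSupport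
    (by rw [φ.tsupport_eq]; exact closedBall_subset_ball (by change r / 2 < r; linarith))
    g hg K hK.le hgL
  have hφ0 : ∀ y, y ∉ ball x r → φ y = 0 := by
    intro y hy
    apply φ.zero_of_le_dist
    rw [mem_ball, not_lt] at hy
    change r / 2 ≤ _
    linarith
  have hφ1 : ∀ y ∈ ball x (r / 4), φ y = 1 := fun y hy =>
    φ.one_of_mem_closedBall (ball_subset_closedBall hy)
  have hKi : 0 < K⁻¹ := by positivity
  have hKK : K * K⁻¹ = 1 := mul_inv_cancel₀ hK.ne'
  let s₀ : ℝ := min (r / 2) (1 / (2 * K ^ 2))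
  have hs₀ : 0 < s₀ := by positivity
  have hs₀r : s₀ ≤ r / 2 := min_le_left _ _
  have hs₀K : s₀ ≤ 1 / (2 * K ^ 2) := min_le_right _ _
  let Q : ℝ := 2 * K * (1 + D / s₀)
  have hQ : 0 < Q := by positivity
  let c : ℝ := min Q⁻¹ (K⁻¹ / 2)
  have hc : 0 < c := by positivity
  refine ⟨r / 4, fun y => φ y * g y, c, by positivity, hc, hc11,
    φ.hasCompactSupport.mul_right, ?_, ?_, ?_, ?_⟩
  · intro y hy
    by_cases hyb : y ∈ ball x r
    · exact mul_nonneg φ.nonneg ((hin y hyb).1 hy).le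
    · simp [hφ0 y hyb]
  · intro y hy
    by_cases hyb : y ∈ ball x r
    · simp [hfr y hyb hy]
    · simp [hφ0 y hyb]
  · intro y hy hyb
    have hyr : y ∈ ball x r := ball_subset_ball (by linarith) hyb
    have hgy := (hin y hyr).1 hy
    simp only [hφ1 y hyb, one_mul]
    suffices hδQ : δ y ≤ Q * g y by
      by_cases hδy : 0 ≤ δ y
      · calc c * δ y ≤ Q⁻¹ * δ y := mul_le_mul_of_nonneg_right (min_le_left _ _) hδy
          _ ≤ Q⁻¹ * (Q * g y) := by gcongr
          _ = g y := by field_simp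
      · have : c * δ y ≤ 0 := mul_nonpos_of_nonneg_of_nonpos hc.le (by linarith)
        linarith
    have hQ' : Q * g y = 2 * K * g y + D / s₀ * (2 * K * g y) := by simp only [Q]; ring
    have hDs : 0 ≤ D / s₀ := by positivity
    by_cases ht : 2 * K * g y < s₀
    · obtain ⟨v, hv1, hv2⟩ := exists_unit_dir (fderiv ℝ g y) (hKi.trans_le (hgK y hyr))
      set t : ℝ := 2 * K * g y with htdef
      have ht0 : 0 < t := by positivity
      have hnorm : ‖(y - t • v) - y‖ = t := by
        rw [sub_sub_cancel_left, norm_neg, norm_smul, hv1, mul_one, norm_eq_abs, abs_of_pos ht0]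
      have hball : y - t • v ∈ ball x r := by
        rw [mem_ball] at hyb ⊢
        have e1 : dist (y - t • v) y = t := by rw [dist_eq_norm, hnorm]
        have e2 := dist_triangle (y - t • v) y x
        linarith
      have hT := taylor_C11 g hg K hgL hK.le y (y - t • v)
      rw [hnorm, sub_sub_cancel_left, map_neg, map_smul, hv2, smul_eq_mul] at hT
      have hT' := (abs_le.1 hT).2
      have h1 : t * K⁻¹ ≤ t * ‖fderiv ℝ g y‖ := mul_le_mul_of_nonneg_left (hgK y hyr) ht0.le
      have h2 : t * K⁻¹ = 2 * g y := by
        rw [htdef]; field_simp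
      have h3 : 2 * K ^ 2 * t < 1 := by
        have : t < 1 / (2 * K ^ 2) := lt_of_lt_of_le ht hs₀K
        rw [lt_div_iff₀ (by positivity)] at this
        linarith
      have h4 : K * t ^ 2 = (2 * K ^ 2 * t) * g y := by
        rw [htdef]; ring
      have h5 : K * t ^ 2 < g y := by
        rw [h4]
        nlinarith
      have hneg : g (y - t • v) < 0 := by linarith
      have hout : y - t • v ∉ Ω := fun h => by
        have := (hin _ hball).1 h
        linarith
      have h6 := hδd y _ hout
      rw [dist_comm, dist_eq_norm, hnorm] at h6
      rw [hQ']
      have : 0 ≤ D / s₀ * t := by positivity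
      linarith
    · rw [not_lt] at ht
      rw [hQ']
      have h1 : D / s₀ * s₀ ≤ D / s₀ * (2 * K * g y) := mul_le_mul_of_nonneg_left ht hDs
      rw [div_mul_cancel₀ _ hs₀.ne'] at h1
      linarith [hδD y]
  · intro y hy hyb
    have hyr : y ∈ ball x r := ball_subset_ball (by linarith) hyb
    have hgy := hfr y hyr hy
    obtain ⟨v, hv1, hv2⟩ := exists_unit_dir (fderiv ℝ g y) (hKi.trans_le (hgK y hyr))
    refine ⟨v, hv1, ?_⟩
    rw [mem_ball] at hyb
    have hτ : 0 < min (r / 4 - dist y x) s₀ := lt_min (by linarith) hs₀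
    filter_upwards [Ioo_mem_nhdsGT hτ] with t ht
    obtain ⟨ht0, ht1⟩ := ht
    rw [lt_min_iff] at ht1
    have hnorm : ‖(y + t • v) - y‖ = t := by
      rw [add_sub_cancel_left, norm_smul, hv1, mul_one, norm_eq_abs, abs_of_pos ht0]
    have hball : y + t • v ∈ ball x (r / 4) := by
      rw [mem_ball]
      have e1 : dist (y + t • v) y = t := by rw [dist_eq_norm, hnorm]
      have e2 := dist_triangle (y + t • v) y x
      linarith
    have hball' : y + t • v ∈ ball x r := ball_subset_ball (by linarith) hball
    have hT := taylor_C11 g hg K hgL hK.le y (y + t • v)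
    rw [hnorm, add_sub_cancel_left, map_smul, hv2, smul_eq_mul, hgy, zero_add] at hT
    have hT' := (abs_le.1 hT).1
    have h1 : t * K⁻¹ ≤ t * ‖fderiv ℝ g y‖ := mul_le_mul_of_nonneg_left (hgK y hyr) ht0.le
    have h3 : 2 * K ^ 2 * t < 1 := by
      have : t < 1 / (2 * K ^ 2) := lt_of_lt_of_le ht1.2 hs₀K
      rw [lt_div_iff₀ (by positivity)] at this
      linarith
    have h4 : K * t ^ 2 ≤ K⁻¹ / 2 * t := by
      have : K * t ^ 2 = (2 * K ^ 2 * t) * (K⁻¹ / 2 * t) := by field_simp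
      rw [this]
      have : 0 ≤ K⁻¹ / 2 * t := by positivity
      nlinarith
    have h5 : K⁻¹ / 2 * t ≤ g (y + t • v) := by linarith
    refine ⟨(hin _ hball').2 (lt_of_lt_of_le (by positivity) h5), ?_⟩
    simp only [hφ1 _ hball, one_mul]
    exact (mul_le_mul_of_nonneg_right (min_le_right _ _) ht0.le).trans h5

theorem exists_uniform_const {ι : Type} (T : Finset ι) (c : ι → ℝ) (hc : ∀ i ∈ T, 0 < c i) :
    ∃ c₀ : ℝ, 0 < c₀ ∧ ∀ i ∈ T, c₀ ≤ c i := by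
  classical
  induction T using Finset.induction_on with
  | empty => exact ⟨1, one_pos, by simp⟩
  | insert a s ha ih =>
    obtain ⟨c₀, h0, h1⟩ := ih (fun i hi => hc i (Finset.mem_insert_of_mem hi))
    refine ⟨min c₀ (c a), lt_min h0 (hc a (Finset.mem_insert_self a s)), fun i hi => ?_⟩
    rcases Finset.mem_insert.1 hi with rfl | hi
    · exact min_le_right _ _
    · exact (min_le_left _ _).trans (h1 i hi)

/-- Global C^{1,1} defining function. -/
theorem exists_defining (Ω : Set E) (hb : Bornology.IsBounded Ω) (δ : E → ℝ)
    (hδn : ∀ x, 0 ≤ δ x)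
    (hδf : ∀ x ∈ Ω, ∃ z ∈ frontier Ω, δ x = dist x z)
    (hpiece : ∀ x ∈ closure Ω,
      ∃ (s : ℝ) (h : E → ℝ) (c : ℝ), 0 < s ∧ 0 < c ∧ IsPiece Ω δ x s h c) :
    ∃ (f : E → ℝ) (c C : ℝ), 0 < c ∧ 0 < C ∧ HasC11 f ∧
      (∀ x ∈ Ω, c * δ x ≤ f x ∧ f x ≤ C * δ x) ∧ ∀ x ∈ frontier Ω, c ≤ ‖fderiv ℝ f x‖ := by
  choose! s h c hs hc hp using hpiece
  obtain ⟨T, hT, hcov⟩ := hb.isCompact_closure.elim_nhds_subcover (fun x => ball x (s x))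
    (fun x hx => ball_mem_nhds x (hs x hx))
  obtain ⟨c₀, hc₀, hc₀le⟩ := exists_uniform_const T c (fun i hi => hc i (hT i hi))
  let f : E → ℝ := fun y => ∑ i ∈ T, h i y
  have hf11 : HasC11 f := HasC11.sum T h (fun i hi => (hp i (hT i hi)).1)
  have hle : ∀ i ∈ T, ∀ y ∈ Ω, h i y ≤ f y := fun i hi y hy =>
    Finset.single_le_sum (f := fun j => h j y) (fun j hj => (hp j (hT j hj)).2.2.1 y hy) hi
  have hf0 : ∀ y ∈ frontier Ω, f y = 0 := fun y hy =>
    Finset.sum_eq_zero fun j hj => (hp j (hT j hj)).2.2.2.1 y hy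
  have hlipf : ∃ M : NNReal, LipschitzWith M f := by
    have : ∀ S : Finset E, (∀ i ∈ S, i ∈ closure Ω) →
        ∃ M : NNReal, LipschitzWith M (fun y => ∑ i ∈ S, h i y) := by
      classical
      intro S
      induction S using Finset.induction_on with
      | empty => intro _; exact ⟨0, by simpa using LipschitzWith.const (0 : ℝ)⟩
      | insert a S ha ih =>
        intro hS
        obtain ⟨M, hM⟩ := ih (fun i hi => hS i (Finset.mem_insert_of_mem hi))
        have hpa := hp a (hS a (Finset.mem_insert_self a S))
        obtain ⟨M', hM'⟩ := hpa.1.1.lipschitzWith_of_hasCompactSupport hpa.2.1 (by norm_num)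
        simp only [Finset.sum_insert ha]
        exact ⟨M' + M, hM'.add hM⟩
    exact this T hT
  obtain ⟨M, hM⟩ := hlipf
  refine ⟨f, c₀, M + 1, hc₀, by positivity, hf11, ?_, ?_⟩
  · intro y hy
    constructor
    · obtain ⟨i, hi, hyi⟩ := Set.mem_iUnion₂.1 (hcov (subset_closure hy))
      exact (mul_le_mul_of_nonneg_right (hc₀le i hi) (hδn y)).trans
        (((hp i (hT i hi)).2.2.2.2.1 y hy hyi).trans (hle i hi y hy))
    · obtain ⟨z, hz, hyz⟩ := hδf y hy
      have := hM.dist_le_mul y z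
      rw [Real.dist_eq, hf0 z hz, sub_zero, ← hyz] at this
      have h1 := (le_abs_self _).trans this
      linarith [hδn y]
  · intro y hy
    obtain ⟨i, hi, hyi⟩ := Set.mem_iUnion₂.1 (hcov (frontier_subset_closure hy))
    obtain ⟨v, hv1, hv⟩ := (hp i (hT i hi)).2.2.2.2.2 y hy hyi
    have hd : HasFDerivAt f (fderiv ℝ f y) y :=
      (hf11.1.differentiable (by norm_num) y).hasFDerivAt
    have hl := (hd.hasLineDerivAt v).tendsto_slope_zero_right
    have hge : c₀ ≤ fderiv ℝ f y v := by
      refine ge_of_tendsto hl ?_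
      filter_upwards [hv, self_mem_nhdsWithin] with t ht ht0
      have ht0' : 0 < t := ht0
      rw [hf0 y hy, sub_zero, smul_eq_mul, le_inv_mul_iff₀ ht0', mul_comm]
      exact (mul_le_mul_of_nonneg_right (hc₀le i hi) ht0'.le).trans (ht.2.trans (hle i hi _ ht.1))
    have := (fderiv ℝ f y).le_opNorm v
    rw [hv1, mul_one] at this
    exact hge.trans ((le_abs_self _).trans this)

end Defining

/-- Lemma 3.1, regularized distance: for a bounded `C^{1,1}`
domain `Ω`, there is a regularized distance `ρ ∈ C^{1,1}(Ω̄)` (here: globally `C^1`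
with Lipschitz derivative, smooth inside `Ω`) such that
(i) `c d(x) ≤ ρ(x) ≤ C d(x)` on `Ω`;
(ii) `|Dρ| ≥ C₀ > 0` on `∂Ω`;
(iii) for every `k ≥ 1`, `|D^{k+2}ρ| ρ^k` is bounded on `Ω`. -/
theorem regularized_distance
    (d : ℕ) (K : ℝ) (Ω : Set (EucD d)) (hΩ : IsC11Domain d Ω K) :
    ∃ (ρ : EucD d → ℝ) (c C C₀ L : ℝ), 0 < c ∧ 0 < C ∧ 0 < C₀ ∧
      ContDiff ℝ 1 ρ ∧ LipschitzWith (Real.toNNReal L) (fderiv ℝ ρ) ∧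
      ContDiffOn ℝ (⊤ : ℕ∞) ρ Ω ∧
      (∀ x ∈ Ω, c * Metric.infDist x (frontier Ω) ≤ ρ x ∧
        ρ x ≤ C * Metric.infDist x (frontier Ω)) ∧
      (∀ x ∈ frontier Ω, C₀ ≤ ‖fderiv ℝ ρ x‖) ∧
      ∀ k : ℕ, 1 ≤ k → ∃ B : ℝ, ∀ x ∈ Ω,
        ‖iteratedFDeriv ℝ (k + 2) ρ x‖ * (ρ x) ^ k ≤ B := by
  obtain ⟨hopen, hbdd, hne, hK, hloc⟩ := hΩ
  by_cases hfe : frontier Ω = ∅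
  · refine ⟨fun _ => 0, 1, 1, 1, 0, one_pos, one_pos, one_pos, contDiff_const, ?_, contDiffOn_const,
      ?_, ?_, ?_⟩
    · have : fderiv ℝ (fun _ : EucD d => (0 : ℝ)) = fun _ => 0 := by funext y; simp
      rw [this]
      exact LipschitzWith.const' _
    · intro x _
      simp [hfe]
    · intro x hx
      simp [hfe] at hx
    · intro k hk
      refine ⟨0, fun x _ => ?_⟩
      rw [zero_pow (by omega), mul_zero]
  have hcompl : Ω ≠ Set.univ := by
    rintro rfl
    simp at hfe
  have hcne : (Ωᶜ).Nonempty := Set.nonempty_compl.2 hcompl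
  let δ : EucD d → ℝ := fun x => infDist x Ωᶜ
  have hδ : ∀ x y, δ x ≤ δ y + dist x y := fun x y => infDist_le_infDist_add_dist
  have hδn : ∀ x, 0 ≤ δ x := fun x => infDist_nonneg
  have hδ0 : ∀ x, x ∉ Ω → δ x = 0 := fun x hx => infDist_zero_of_mem hx
  have hpos : ∀ x, x ∈ Ω ↔ 0 < δ x := by
    intro x
    rw [← hopen.isClosed_compl.notMem_iff_infDist_pos hcne]
    simp
  have hδd : ∀ x z, z ∉ Ω → δ x ≤ dist x z := fun x z hz => infDist_le_dist_of_mem hz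
  have hδf : ∀ x ∈ Ω, ∃ z ∈ frontier Ω, δ x = dist x z := fun x hx =>
    exists_mem_frontier_infDist_compl_eq_dist hx hcompl
  have hfrout : ∀ z ∈ frontier Ω, z ∉ Ω := by
    intro z hz
    rw [hopen.frontier_eq] at hz
    exact hz.2
  have hδeq : ∀ x ∈ Ω, infDist x (frontier Ω) = δ x := by
    intro x hx
    obtain ⟨z, hz, hxz⟩ := hδf x hx
    refine le_antisymm ?_ ?_
    · rw [hxz]; exact infDist_le_dist_of_mem hz
    · exact infDist_le_infDist_of_subset (fun z hz => hfrout z hz) ⟨z, hz⟩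
  obtain ⟨D, hD, hδD⟩ : ∃ D : ℝ, 0 < D ∧ ∀ x, δ x ≤ D := by
    obtain ⟨z, hz⟩ := hcne
    obtain ⟨R, hR⟩ := hbdd.subset_closedBall z
    refine ⟨|R| + 1, by positivity, fun x => ?_⟩
    by_cases hx : x ∈ Ω
    · have h1 := hδd x z hz
      have h2 := hR hx
      rw [mem_closedBall] at h2
      linarith [le_abs_self R]
    · rw [hδ0 x hx]; positivity
  obtain ⟨f, c, C, hc, hC, ⟨hf1, L, hfL⟩, hcmp, hgrad⟩ := exists_defining Ω hbdd δ hδn hδf (by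
    intro x hx
    by_cases hxΩ : x ∈ Ω
    · exact exists_piece_interior Ω hopen δ D hD hδD x hxΩ
    · have hxf : x ∈ frontier Ω := by rw [hopen.frontier_eq]; exact ⟨hx, hxΩ⟩
      obtain ⟨g, r, hr, hg, hgL, hgK, hin, hfr⟩ := hloc x hxf
      have hfd : fderiv ℝ (fun y => - g y) = fun y => - fderiv ℝ g y := by
        funext y; exact fderiv_fun_neg
      refine exists_piece_boundary Ω δ D hD hδD hδd x K hK (fun y => - g y) r hr hg.neg ?_ ?_ ?_ ?_
      · intro y z
        have := hgL.dist_le_mul z y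
        rw [Real.coe_toNNReal _ hK.le, dist_eq_norm, dist_comm, dist_eq_norm] at this
        rw [hfd]
        rwa [neg_sub_neg]
      · intro y hy
        rw [hfd, norm_neg]
        exact hgK y hy
      · intro y hy
        have := Set.ext_iff.1 hin y
        simp only [Set.mem_inter_iff, hy, and_true, Set.mem_setOf_eq] at this
        rw [this, neg_pos]
      · intro y hy hyf
        have := Set.ext_iff.1 hfr y
        simp only [Set.mem_inter_iff, hy, and_true, Set.mem_setOf_eq] at this
        rw [this.1 hyf, neg_zero])
  obtain ⟨ρ, L', h1, h2, h3, h4, h5, h6⟩ := regularize_full Ω δ hδ hpos hδ0 f hf1 L L.2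
    (fun x y => by simpa [dist_eq_norm] using hfL.dist_le_mul x y) c C hc hC
    (fun x hx => (hcmp x hx).1) (fun x hx => (hcmp x hx).2)
  refine ⟨ρ, c / 2, 2 * C, c, L', by positivity, by positivity, hc, h1, h2, h3, ?_, ?_,
    fun k _ => h6 k⟩
  · intro x hx
    rw [hδeq x hx]
    exact h4 x hx
  · intro x hx
    rw [h5 x (hfrout x hx)]
    exact hgrad x hx
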